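/- Let L be a ℤ-graded Lie conformal algebra of class 𝒱 with deg p_{−1,1}(∂) = 1 and deg p_{0,1}(λ) = 1. Then L is isomorphic, as a Lie conformal algebra, to CL₂(0,s) or to CL₃(s) for some s ∈ ℂ. -/

import Mathlib

open scoped BigOperators Classical ENNReal
open Polynomial

noncomputable section

/-- A Lie conformal algebra over `ℂ`, encoded via its `n`-th products
`a_(n) b` and the operator `∂ = D`.  The `λ`-bracket is
`[a_λ b] = ∑ₙ (λⁿ/n!) • (a_(n) b)`. -/
structure LieConformalAlgebra (L : Type) [AddCommGroup L] [Module ℂ L] : Type where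
  D : L →ₗ[ℂ] L
  prd : ℕ → L →ₗ[ℂ] L →ₗ[ℂ] L
  bound : ∀ a b : L, ∃ N : ℕ, ∀ n : ℕ, N ≤ n → prd n a b = 0
  sesq : ∀ (n : ℕ) (a b : L), prd n (D a) b = (-(n : ℂ)) • prd (n - 1) a b
  sesq' : ∀ (n : ℕ) (a b : L),
    prd n a (D b) = D (prd n a b) + (n : ℂ) • prd (n - 1) a b
  skew : ∀ (n : ℕ) (a b : L),
    prd n a b
      = - ∑ᶠ j : ℕ, ((-1 : ℂ) ^ (n + j) * ((Nat.factorial j : ℂ))⁻¹) • (⇑D)^[j] (prd (n + j) b a)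
  jacobi : ∀ (m n : ℕ) (a b c : L),
    prd m a (prd n b c) - prd n b (prd m a c)
      = ∑ j ∈ Finset.range (m + 1), (Nat.choose m j : ℂ) • prd (m + n - j) (prd j a b) c

namespace LieConformalAlgebra

variable {L : Type} [AddCommGroup L] [Module ℂ L]

/-- The action of a polynomial `q(∂) ∈ ℂ[∂]` on an element. -/
def applyP (C : LieConformalAlgebra L) (q : Polynomial ℂ) (x : L) : L :=
  q.sum fun k c => c • (⇑C.D)^[k] x

/-- `[a_λ b] = p(∂, λ) • t`, where `p ∈ ℂ[∂][λ]` is a two-variable polynomial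
(outer variable `λ`, inner variable `∂`). -/
def BracketEq (C : LieConformalAlgebra L) (a b t : L) (p : Polynomial (Polynomial ℂ)) : Prop :=
  ∀ n : ℕ, C.prd n a b = (Nat.factorial n : ℂ) • C.applyP (p.coeff n) t

def IsSubalgebra (C : LieConformalAlgebra L) (N : Submodule ℂ L) : Prop :=
  (∀ x ∈ N, C.D x ∈ N) ∧ ∀ n : ℕ, ∀ a ∈ N, ∀ b ∈ N, C.prd n a b ∈ N

def IsIdeal (C : LieConformalAlgebra L) (N : Submodule ℂ L) : Prop :=
  (∀ x ∈ N, C.D x ∈ N) ∧ ∀ (n : ℕ) (a : L), ∀ b ∈ N, C.prd n a b ∈ N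

/-- `L` is finitely generated as a Lie conformal algebra (finite type). -/
def FiniteType (C : LieConformalAlgebra L) : Prop :=
  ∃ s : Finset L, ∀ N : Submodule ℂ L, C.IsSubalgebra N → (s : Set L) ⊆ (N : Set L) → N = ⊤

/-- `L` is finitely generated as a `ℂ[∂]`-module. -/
def FGPolyModule (C : LieConformalAlgebra L) : Prop :=
  ∃ s : Finset L, ∀ N : Submodule ℂ L, (∀ x ∈ N, C.D x ∈ N) → (s : Set L) ⊆ (N : Set L) → N = ⊤

/-- Iterated adjoint action `a₁_(k₁)(a₂_(k₂)(⋯ x))`. -/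
def iterPrd (C : LieConformalAlgebra L) : List (L × ℕ) → L → L
  | [], x => x
  | (a, k) :: t, x => C.prd k a (iterPrd C t x)

/-- The `ℂ[∂]`-rank of the submodule `N` is at most `r`:
any `r+1` elements of `N` are `ℂ[∂]`-linearly dependent. -/
def polyRankLE (C : LieConformalAlgebra L) (N : Submodule ℂ L) (r : ℕ) : Prop :=
  ∀ v : Fin (r + 1) → L, (∀ k, v k ∈ N) →
    ∃ q : Fin (r + 1) → Polynomial ℂ, (∃ k, q k ≠ 0) ∧ ∑ k, C.applyP (q k) (v k) = 0

/-- The family `v` is a free `ℂ[∂]`-basis of `L`. -/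
def IsFreePolyBasis (C : LieConformalAlgebra L) {ι : Type} (v : ι → L) : Prop :=
  LinearIndependent ℂ (fun q : ι × ℕ => (⇑C.D)^[q.2] (v q.1)) ∧
  Submodule.span ℂ (Set.range fun q : ι × ℕ => (⇑C.D)^[q.2] (v q.1)) = ⊤

/-- `[U_λ V]`: the `ℂ`-span of all `u_(n) v`. -/
def bspan (C : LieConformalAlgebra L) (U V : Set L) : Submodule ℂ L :=
  Submodule.span ℂ {x : L | ∃ (n : ℕ) (u : L) (w : L), u ∈ U ∧ w ∈ V ∧ x = C.prd n u w}

end LieConformalAlgebra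

/-- `∂` as an element of `ℂ[∂][λ]`. -/
def Pd : Polynomial (Polynomial ℂ) := Polynomial.C Polynomial.X
/-- `λ` as an element of `ℂ[∂][λ]`. -/
def Pl : Polynomial (Polynomial ℂ) := Polynomial.X
/-- a constant in `ℂ[∂][λ]`. -/
def Pc (a : ℂ) : Polynomial (Polynomial ℂ) := Polynomial.C (Polynomial.C a)

/-- Total degree of a two-variable polynomial in `ℂ[∂][λ]`. -/
def tdeg (p : Polynomial (Polynomial ℂ)) : ℕ :=
  p.support.sup fun n => n + (p.coeff n).natDegree

section ModelPolynomials

/-- structure polynomials of `𝒱(s)` -/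
def pV (s : ℂ) (i j : ℤ) : Polynomial (Polynomial ℂ) :=
  Pd + Pc 2 * Pl + Pc (s * ((i : ℂ) - (j : ℂ)))

/-- structure polynomials of `CL₁(s)` -/
def pCL1 (s : ℂ) (i j : ℤ) : Polynomial (Polynomial ℂ) :=
  Pc ((i : ℂ) + 1) * Pd + Pc ((i : ℂ) + (j : ℂ) + 2) * Pl + Pc (s * ((i : ℂ) - (j : ℂ)))

/-- structure polynomials of `CL₂(b,s)` -/
def pCL2 (b s : ℂ) (i j : ℤ) : Polynomial (Polynomial ℂ) :=
  Pc ((i : ℂ) + b) * Pd + Pc ((i : ℂ) + (j : ℂ) + 2 * b) * Pl + Pc (s * ((i : ℂ) - (j : ℂ)))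

/-- structure polynomials of `SCL₂(b,s)` (for `2b ∈ ℤ`), w.r.t. the basis
`L'ᵢ = Lᵢ (i ≠ -2b)`, `L'_{-2b} = (∂+2s)L_{-2b}` of the corresponding graded
subalgebra of `CL₂(b,s)`. -/
def pSCL2 (b s : ℂ) (i j : ℤ) : Polynomial (Polynomial ℂ) :=
  (if (i : ℂ) = -(2 * b) then Pc (2 * s) - Pl else 1) *
  (if (j : ℂ) = -(2 * b) then Pd + Pl + Pc (2 * s) else 1) *
  (if (i : ℂ) + (j : ℂ) = -(2 * b) then Pc ((i : ℂ) + b) else pCL2 b s i j)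

/-- structure polynomials of `CL₃(s)` -/
def pCL3 (s : ℂ) (i j : ℤ) : Polynomial (Polynomial ℂ) :=
  if i + j = 0 then Pc (i : ℂ) * (Pd + Pc s)
  else if i = 0 then Pc (-(j : ℂ)) * (Pc (2 * s) - Pl)
  else if j = 0 then Pc (i : ℂ) * (Pd + Pl + Pc (2 * s))
  else Pc (i : ℂ) * Pd + Pc ((i : ℂ) + (j : ℂ)) * Pl + Pc (s * ((i : ℂ) - (j : ℂ)))

/-- structure polynomials of `ECL(s)` -/
def pECL (s : ℂ) (i j : ℤ) : Polynomial (Polynomial ℂ) :=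
  if i + j = 0 then Pc (i : ℂ) * (Pd + Pc s) * (Pd + Pc (2 * s))
  else if i = 0 then Pc (-(j : ℂ))
  else if j = 0 then Pc (i : ℂ)
  else Pc (i : ℂ) * Pd + Pc ((i : ℂ) + (j : ℂ)) * Pl + Pc (s * ((i : ℂ) - (j : ℂ)))

/-- structure polynomials of `M(1)` (indices `≥ -1`, completed by skew-symmetry) -/
def pM1 (i j : ℤ) : Polynomial (Polynomial ℂ) :=
  if i = 1 ∧ j = 1 then Pd + Pc 2 * Pl
  else if i = -1 ∧ 1 ≤ j then Pc (((j : ℂ) + 1) * ((j : ℂ) - 2) / 2)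
  else if j = -1 ∧ 1 ≤ i then Pc (-(((i : ℂ) + 1) * ((i : ℂ) - 2) / 2))
  else if i = 0 then Pc (-(j : ℂ))
  else if j = 0 then Pc (i : ℂ)
  else if i = 1 ∧ 2 ≤ j then 1
  else if j = 1 ∧ 2 ≤ i then -1
  else 0

/-- structure polynomials of `M(2)` (completed by skew-symmetry) -/
def pM2 (i j : ℤ) : Polynomial (Polynomial ℂ) :=
  if i = 1 ∧ j = 1 then Pd + Pc 2 * Pl
  else if i = -1 ∧ j = -1 then Pd + Pc 2 * Pl
  else if i = 0 then Pc (-(j : ℂ))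
  else if j = 0 then Pc (i : ℂ)
  else if i = -1 ∧ 1 ≤ j then Pc (((j : ℂ) + 1) * ((j : ℂ) - 2) / 2)
  else if j = -1 ∧ 1 ≤ i then Pc (-(((i : ℂ) + 1) * ((i : ℂ) - 2) / 2))
  else if i = 1 ∧ j ≤ -2 then Pc (((j : ℂ) - 1) * ((j : ℂ) + 2) / 2)
  else if j = 1 ∧ i ≤ -2 then Pc (-(((i : ℂ) - 1) * ((i : ℂ) + 2) / 2))
  else if i = -1 ∧ j ≤ -2 then 1
  else if j = -1 ∧ i ≤ -2 then -1
  else if i = 1 ∧ 2 ≤ j then 1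
  else if j = 1 ∧ 2 ≤ i then -1
  else 0

end ModelPolynomials

namespace LieConformalAlgebra

variable {L : Type} [AddCommGroup L] [Module ℂ L]

/-- `C` is isomorphic to the Virasoro Lie conformal algebra. -/
def IsVir (C : LieConformalAlgebra L) : Prop :=
  ∃ e : L, C.IsFreePolyBasis (fun _ : Unit => e) ∧ C.BracketEq e e e (Pd + Pc 2 * Pl)

/-- `C` is isomorphic to the loop Virasoro Lie conformal algebra `𝒱(s)`. -/
def IsV (C : LieConformalAlgebra L) (s : ℂ) : Prop :=
  ∃ v : ℤ → L, C.IsFreePolyBasis v ∧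
    ∀ i j : ℤ, C.BracketEq (v i) (v j) (v (i + j)) (pV s i j)

/-- `C` is isomorphic to `CL₁(s)`. -/
def IsCL1 (C : LieConformalAlgebra L) (s : ℂ) : Prop :=
  ∃ v : ℤ → L, C.IsFreePolyBasis (fun q : {i : ℤ // -1 ≤ i} => v q.1) ∧
    ∀ i j : ℤ, -1 ≤ i → -1 ≤ j →
      C.BracketEq (v i) (v j) (if -1 ≤ i + j then v (i + j) else 0) (pCL1 s i j)

/-- `C` is isomorphic to `CL₂(b,s)`. -/
def IsCL2 (C : LieConformalAlgebra L) (b s : ℂ) : Prop :=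
  ∃ v : ℤ → L, C.IsFreePolyBasis v ∧
    ∀ i j : ℤ, C.BracketEq (v i) (v j) (v (i + j)) (pCL2 b s i j)

/-- `C` is isomorphic to `SCL₂(b,s)`. -/
def IsSCL2 (C : LieConformalAlgebra L) (b s : ℂ) : Prop :=
  ∃ v : ℤ → L, C.IsFreePolyBasis v ∧
    ∀ i j : ℤ, C.BracketEq (v i) (v j) (v (i + j)) (pSCL2 b s i j)

/-- `C` is isomorphic to `CL₃(s)`. -/
def IsCL3 (C : LieConformalAlgebra L) (s : ℂ) : Prop :=
  ∃ v : ℤ → L, C.IsFreePolyBasis v ∧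
    ∀ i j : ℤ, C.BracketEq (v i) (v j) (v (i + j)) (pCL3 s i j)

/-- `C` is isomorphic to `ECL(s)`. -/
def IsECL (C : LieConformalAlgebra L) (s : ℂ) : Prop :=
  ∃ v : ℤ → L, C.IsFreePolyBasis v ∧
    ∀ i j : ℤ, C.BracketEq (v i) (v j) (v (i + j)) (pECL s i j)

/-- `C` is isomorphic to `M(1)`. -/
def IsM1 (C : LieConformalAlgebra L) : Prop :=
  ∃ v : ℤ → L, C.IsFreePolyBasis (fun q : {i : ℤ // -1 ≤ i} => v q.1) ∧
    ∀ i j : ℤ, -1 ≤ i → -1 ≤ j →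
      C.BracketEq (v i) (v j) (if -1 ≤ i + j then v (i + j) else 0) (pM1 i j)

/-- `C` is isomorphic to `M(2)`. -/
def IsM2 (C : LieConformalAlgebra L) : Prop :=
  ∃ v : ℤ → L, C.IsFreePolyBasis v ∧
    ∀ i j : ℤ, C.BracketEq (v i) (v j) (v (i + j)) (pM2 i j)

/-- `C` is isomorphic to the current Lie conformal algebra `Cur 𝔤`. -/
def IsCur (C : LieConformalAlgebra L) (g : Type) [LieRing g] [LieAlgebra ℂ g] : Prop :=
  ∃ φ : g →ₗ[ℂ] L,
    Function.Bijective (fun f : ℕ →₀ g => f.sum fun k x => (⇑C.D)^[k] (φ x)) ∧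
    (∀ x y : g, C.prd 0 (φ x) (φ y) = φ ⁅x, y⁆) ∧
    ∀ n : ℕ, 1 ≤ n → ∀ x y : g, C.prd n (φ x) (φ y) = 0

/-- `C ≅ Cur sl(2,ℂ)`. -/
def IsCurSl2 (C : LieConformalAlgebra L) : Prop :=
  C.IsCur ↥(LieAlgebra.SpecialLinear.sl (Fin 2) ℂ)

/-- `C ≅ Cur 𝒲`, `𝒲` the Witt algebra (basis `wᵢ`, `[wᵢ,wⱼ] = (j-i)w_{i+j}`). -/
def IsCurWitt (C : LieConformalAlgebra L) : Prop :=
  ∃ v : ℤ → L, C.IsFreePolyBasis v ∧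
    (∀ i j : ℤ, C.prd 0 (v i) (v j) = (((j : ℂ) - (i : ℂ))) • v (i + j)) ∧
    ∀ n : ℕ, 1 ≤ n → ∀ i j : ℤ, C.prd n (v i) (v j) = 0

/-- `C ≅ Cur 𝒲₁`, `𝒲₁` spanned by the `wᵢ`, `i ≥ -1`. -/
def IsCurWitt1 (C : LieConformalAlgebra L) : Prop :=
  ∃ v : ℤ → L, C.IsFreePolyBasis (fun q : {i : ℤ // -1 ≤ i} => v q.1) ∧
    (∀ i j : ℤ, -1 ≤ i → -1 ≤ j →
      C.prd 0 (v i) (v j) = (((j : ℂ) - (i : ℂ))) • (if -1 ≤ i + j then v (i + j) else 0)) ∧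
    ∀ n : ℕ, 1 ≤ n → ∀ i j : ℤ, -1 ≤ i → -1 ≤ j → C.prd n (v i) (v j) = 0

end LieConformalAlgebra

/-- A `ℤ`-graded Lie conformal algebra. -/
structure GradedLCA (L : Type) [AddCommGroup L] [Module ℂ L]
    extends LieConformalAlgebra L where
  G : ℤ → Submodule ℂ L
  internal : DirectSum.IsInternal G
  dGrade : ∀ i : ℤ, ∀ x ∈ G i, D x ∈ G i
  prdGrade : ∀ (i j : ℤ) (n : ℕ), ∀ a ∈ G i, ∀ b ∈ G j, prd n a b ∈ G (i + j)

namespace GradedLCA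

variable {L : Type} [AddCommGroup L] [Module ℂ L]

/-- A graded ideal: an ideal generated by homogeneous elements. -/
def IsGradedIdeal (C : GradedLCA L) (N : Submodule ℂ L) : Prop :=
  C.toLieConformalAlgebra.IsIdeal N ∧ (⨆ i : ℤ, N ⊓ C.G i) = N

/-- `L` is simple graded: nonzero bracket, and the only graded ideals are `⊥` and `⊤`. -/
def IsSimpleGraded (C : GradedLCA L) : Prop :=
  (∃ (n : ℕ) (a b : L), C.prd n a b ≠ 0) ∧
  ∀ N : Submodule ℂ L, C.IsGradedIdeal N → N = ⊥ ∨ N = ⊤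

/-- `[L_λ L] = L`. -/
def Perfect (C : GradedLCA L) : Prop :=
  Submodule.span ℂ {x : L | ∃ (n : ℕ) (a b : L), x = C.prd n a b} = ⊤

/-- Each component `L_i` is a nilpotent `L₀`-module under the adjoint action. -/
def Rootless (C : GradedLCA L) : Prop :=
  ∀ i : ℤ, ∃ n : ℕ, 1 ≤ n ∧ ∀ l : List (L × ℕ), l.length = n →
    (∀ q ∈ l, q.1 ∈ C.G 0) → ∀ x ∈ C.G i, C.toLieConformalAlgebra.iterPrd l x = 0

/-- The ranks of the components are uniformly bounded. -/
def UniformlyBounded (C : GradedLCA L) : Prop :=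
  ∃ N : ℕ, 1 ≤ N ∧ ∀ i : ℤ, C.toLieConformalAlgebra.polyRankLE (C.G i) N

end GradedLCA

/-- A module over a Lie conformal algebra, encoded via the `n`-th actions. -/
structure LCAModule {L : Type} [AddCommGroup L] [Module ℂ L] (C : LieConformalAlgebra L)
    (M : Type) [AddCommGroup M] [Module ℂ M] : Type where
  DM : M →ₗ[ℂ] M
  act : ℕ → L →ₗ[ℂ] M →ₗ[ℂ] M
  bound : ∀ (a : L) (m : M), ∃ N : ℕ, ∀ n : ℕ, N ≤ n → act n a m = 0
  sesq : ∀ (n : ℕ) (a : L) (m : M), act n (C.D a) m = (-(n : ℂ)) • act (n - 1) a m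
  sesq' : ∀ (n : ℕ) (a : L) (m : M),
    act n a (DM m) = DM (act n a m) + (n : ℂ) • act (n - 1) a m
  comm : ∀ (p q : ℕ) (a b : L) (m : M),
    act p a (act q b m) - act q b (act p a m)
      = ∑ j ∈ Finset.range (p + 1), (Nat.choose p j : ℂ) • act (p + q - j) (C.prd j a b) m

namespace LCAModule

variable {L : Type} [AddCommGroup L] [Module ℂ L] {C : LieConformalAlgebra L}
variable {M : Type} [AddCommGroup M] [Module ℂ M]

/-- Iterated action `a₁_(k₁)(a₂_(k₂)(⋯ m))`. -/
def iterAct (ρ : LCAModule C M) : List (L × ℕ) → M → M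
  | [], m => m
  | (a, k) :: t, m => ρ.act k a (iterAct ρ t m)

/-- `N` is an `L`-submodule of `M`. -/
def IsSub (ρ : LCAModule C M) (N : Submodule ℂ M) : Prop :=
  (∀ m ∈ N, ρ.DM m ∈ N) ∧ ∀ (n : ℕ) (a : L), ∀ m ∈ N, ρ.act n a m ∈ N

/-- `M` is a nilpotent module. -/
def Nilpotent (ρ : LCAModule C M) : Prop :=
  ∃ n : ℕ, 1 ≤ n ∧ ∀ l : List (L × ℕ), l.length = n → ∀ m : M, ρ.iterAct l m = 0

/-- `M` is finitely generated as an `L`-module. -/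
def FG (ρ : LCAModule C M) : Prop :=
  ∃ s : Finset M, ∀ N : Submodule ℂ M, ρ.IsSub N → (s : Set M) ⊆ (N : Set M) → N = ⊤

/-- The `L`-submodule `N` is finitely generated as an `L`-module. -/
def FGIn (ρ : LCAModule C M) (N : Submodule ℂ M) : Prop :=
  ∃ s : Finset M, (s : Set M) ⊆ (N : Set M) ∧
    ∀ P : Submodule ℂ M, ρ.IsSub P → (s : Set M) ⊆ (P : Set M) → N ≤ P

/-- `M` is finitely generated as a `ℂ[∂]`-module. -/
def FGPoly (ρ : LCAModule C M) : Prop :=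
  ∃ s : Finset M, ∀ N : Submodule ℂ M, (∀ m ∈ N, ρ.DM m ∈ N) → (s : Set M) ⊆ (N : Set M) → N = ⊤

end LCAModule

/-- A family is `ℂ[∂]`-linearly independent. -/
def polyIndep {M : Type} [AddCommGroup M] [Module ℂ M] (DM : M →ₗ[ℂ] M)
    {r : ℕ} (v : Fin r → M) : Prop :=
  ∀ q : Fin r → Polynomial ℂ,
    (∑ k, (q k).sum fun t c => c • (⇑DM)^[t] (v k)) = 0 → ∀ k, q k = 0

/-- The `ℂ[∂]`-rank of a submodule, in `ℕ∞`. -/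
def polyRank {M : Type} [AddCommGroup M] [Module ℂ M] (DM : M →ₗ[ℂ] M)
    (N : Submodule ℂ M) : ℕ∞ :=
  ⨆ r ∈ {r : ℕ | ∃ v : Fin r → M, (∀ k, v k ∈ N) ∧ polyIndep DM v}, (r : ℕ∞)

/-- A graded module over a `ℤ`-graded Lie conformal algebra. -/
structure GradedLCAModule {L : Type} [AddCommGroup L] [Module ℂ L] (C : GradedLCA L)
    (M : Type) [AddCommGroup M] [Module ℂ M]
    extends LCAModule C.toLieConformalAlgebra M where
  GM : ℤ → Submodule ℂ M
  internal : DirectSum.IsInternal GM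
  dGrade : ∀ i : ℤ, ∀ m ∈ GM i, DM m ∈ GM i
  actGrade : ∀ (i j : ℤ) (n : ℕ), ∀ a ∈ C.G i, ∀ m ∈ GM j, act n a m ∈ GM (i + j)

namespace GradedLCAModule

variable {L : Type} [AddCommGroup L] [Module ℂ L] {C : GradedLCA L}
variable {M : Type} [AddCommGroup M] [Module ℂ M]

/-- `Mⁿ = ⊕_{|i| ≤ n} M_i`. -/
def seg (ρ : GradedLCAModule C M) (n : ℕ) : Submodule ℂ M :=
  ⨆ i : ℤ, ⨆ _ : |i| ≤ (n : ℤ), ρ.GM i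

/-- `e(M) = liminf (1/n) rank_{ℂ[∂]} Mⁿ`. -/
def eM (ρ : GradedLCAModule C M) : ℝ≥0∞ :=
  Filter.atTop.liminf fun n : ℕ => (polyRank ρ.DM (ρ.seg n) : ℝ≥0∞) / (n : ℝ≥0∞)

/-- Each `M_i` is a nilpotent `L₀`-module. -/
def Weightless (ρ : GradedLCAModule C M) : Prop :=
  ∀ i : ℤ, ∃ n : ℕ, 1 ≤ n ∧ ∀ l : List (L × ℕ), l.length = n →
    (∀ q ∈ l, q.1 ∈ C.G 0) → ∀ m ∈ ρ.GM i, ρ.toLCAModule.iterAct l m = 0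

/-- The submodule `I(M)` generated by all homogeneous `v` lying in the span of
the iterated actions of `L` on `v`. -/
def IM (ρ : GradedLCAModule C M) : Submodule ℂ M :=
  sInf {N : Submodule ℂ M | ρ.toLCAModule.IsSub N ∧
    {v : M | (∃ i : ℤ, v ∈ ρ.GM i) ∧
      v ∈ Submodule.span ℂ
        {w : M | ∃ l : List (L × ℕ), 1 ≤ l.length ∧ w = ρ.toLCAModule.iterAct l v}} ⊆ N}

end GradedLCAModule

/-- The structure context for graded Lie conformal algebras all of whose
nonzero components are free of rank one over `ℂ[∂]`: fixed homogeneous bases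
`bas i` and structure polynomials `sp i j ∈ ℂ[∂][λ]`, with `0 ∈ Supp(L)` and
`L₀` abelian. -/
structure RankOneContext (L : Type) [AddCommGroup L] [Module ℂ L]
    extends GradedLCA L where
  bas : ℤ → L
  sp : ℤ → ℤ → Polynomial (Polynomial ℂ)
  bas_mem : ∀ i : ℤ, bas i ∈ G i
  bas_zero : ∀ i : ℤ, G i = ⊥ → bas i = 0
  bas_indep : ∀ i : ℤ, G i ≠ ⊥ → LinearIndependent ℂ fun k : ℕ => (⇑D)^[k] (bas i)
  bas_span : ∀ i : ℤ, G i ≠ ⊥ →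
    G i = Submodule.span ℂ (Set.range fun k : ℕ => (⇑D)^[k] (bas i))
  sp_brkt : ∀ (i j : ℤ) (n : ℕ),
    prd n (bas i) (bas j)
      = (Nat.factorial n : ℂ) • (((sp i j).coeff n).sum fun k c => c • (⇑D)^[k] (bas (i + j)))
  sp_zero : ∀ i j : ℤ, (G i = ⊥ ∨ G j = ⊥ ∨ G (i + j) = ⊥) → sp i j = 0
  supp_zero : G 0 ≠ ⊥
  abelian0 : ∀ n : ℕ, ∀ x ∈ G 0, ∀ y ∈ G 0, prd n x y = 0

/-- A Lie conformal algebra of class `𝒱`. -/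
structure ClassV (L : Type) [AddCommGroup L] [Module ℂ L]
    extends RankOneContext L where
  supp_one : G 1 ≠ ⊥
  supp_negone : G (-1) ≠ ⊥
  genV : ∀ N : Submodule ℂ L, (∀ x ∈ N, D x ∈ N) →
    (∀ n : ℕ, ∀ a ∈ N, ∀ b ∈ N, prd n a b ∈ N) →
    G 1 ≤ N → G 0 ≤ N → G (-1) ≤ N → N = ⊤
  ne_m11 : sp (-1) 1 ≠ 0
  ne_01 : sp 0 1 ≠ 0


structure VFam (S : ℤ → Prop) (P : ℤ → ℤ → ℂ → ℂ → ℂ) : Prop where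
  poly : ∀ i j, ∃ p : Polynomial (Polynomial ℂ), ∀ x l, P i j x l = p.evalEval x l
  jac : ∀ i j k, S (i + j + k) → ∀ x l m, P j k (x + l) m * P i (j + k) x l
    - P i k (x + m) l * P j (i + k) x m = P i j (-l - m) l * P (i + j) k x (l + m)
  skew : ∀ i j, S (i + j) → ∀ x l, P i j x l = - P j i x (-l - x)
  supp : ∀ i j, ¬ S (i + j) → ∀ x l, P i j x l = 0
  s0 : S 0
  s1 : S 1
  sm1 : S (-1)
  ab : ∀ x l, P 0 0 x l = 0

def VT (t r s : ℂ) (i j : ℤ) (x l : ℂ) : ℂ :=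
  if i + j = 0 then i * (x + t) else if i = 0 then j * (l - r)
  else if j = 0 then i * (x + l + r) else i * x + (i + j) * l + s * (i - j)

theorem VFam.gauge {S P} (h : VFam S P) (k : ℤ → ℂ) (hk : ∀ i, k i ≠ 0) :
    VFam S (fun i j x l => k i * k j / k (i + j) * P i j x l) where
  poly i j := by
    obtain ⟨p, hp⟩ := h.poly i j
    refine ⟨C (C (k i * k j / k (i + j))) * p, fun x l => ?_⟩
    rw [hp, Polynomial.evalEval_mul]; simp [Polynomial.evalEval]
  jac i j k' hS x l m := by
    have := h.jac i j k' hS x l m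
    have e1 : i + (j + k') = i + j + k' := by ring
    have e2 : j + (i + k') = i + j + k' := by ring
    simp only [e1, e2] at this ⊢
    have h1 := hk (j + k'); have h2 := hk (i + k'); have h3 := hk (i + j)
    have h4 := hk (i + j + k')
    field_simp
    linear_combination (k i * k j * k k') * this
  skew i j hS x l := by
    have := h.skew i j hS x l
    simp only [add_comm j i]
    rw [this]; ring
  supp i j hS x l := by simp [h.supp i j hS x l]
  s0 := h.s0
  s1 := h.s1
  sm1 := h.sm1
  ab x l := by simp [h.ab]

theorem VFam.reflect {S P} (h : VFam S P) :
    VFam (fun i => S (-i)) (fun i j x l => P (-i) (-j) x l) where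
  poly i j := h.poly _ _
  jac i j k hS x l m := by
    have := h.jac (-i) (-j) (-k) (by convert hS using 1; ring) x l m
    simpa only [← neg_add] using this
  skew i j hS x l := h.skew _ _ (by convert hS using 1; ring) x l
  supp i j hS x l := h.supp _ _ (by intro h; apply hS; convert h using 1; ring) x l
  s0 := by simpa using h.s0
  s1 := h.sm1
  sm1 := by simpa using h.s1
  ab x l := by simpa using h.ab x l

theorem poly_line (p : Polynomial (Polynomial ℂ)) (u v : Polynomial ℂ) :
    ∃ q : Polynomial ℂ, ∀ x, q.eval x = p.evalEval (u.eval x) (v.eval x) := by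
  refine ⟨(p.map (compRingHom u)).eval v, fun x => ?_⟩
  induction p using Polynomial.induction_on' with
  | add a b ha hb => simp_all [Polynomial.evalEval_add]
  | monomial n a => simp [Polynomial.evalEval, Polynomial.eval_comp]

theorem noroot_const (q : Polynomial ℂ) (h : ∀ x, q.eval x ≠ 0) : ∃ c, c ≠ 0 ∧ ∀ x, q.eval x = c := by
  by_cases hd : q.degree = 0
  · rw [Polynomial.eq_C_of_degree_eq_zero hd] at h ⊢
    simp only [eval_C] at h ⊢
    exact ⟨_, h 0, fun _ => rfl⟩
  · obtain ⟨z, hz⟩ := IsAlgClosed.exists_root q hd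
    exact absurd hz (h z)

theorem evalEval_ext {p q : Polynomial (Polynomial ℂ)} (h : ∀ x l, p.evalEval x l = q.evalEval x l) :
    p = q := by
  ext1 n
  apply Polynomial.funext
  intro x
  have : p.map (evalRingHom x) = q.map (evalRingHom x) := by
    apply Polynomial.funext
    intro l
    have := h x l
    rwa [← Polynomial.map_evalRingHom_eval, ← Polynomial.map_evalRingHom_eval] at this
  have := congrArg (fun f => f.coeff n) this
  simpa using this

theorem factor_lemma (n s : ℂ) (hn : n + 1 ≠ 0) (F g : ℂ → ℂ → ℂ)
    (hg : ∃ p : Polynomial (Polynomial ℂ), ∀ x l, g x l = p.evalEval x l)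
    (h : ∀ x l m, F (x + l) m * g x l
      = (x + l + (n + 1) * m + s * (1 - n)) * (n * l - x - s * (n + 2))) :
    ∃ c : ℂ, c ≠ 0 ∧ (∀ x m, F x m = c * (x + (n + 1) * m + s * (1 - n))) ∧
      ∀ x l, g x l = c⁻¹ * (n * l - x - s * (n + 2)) := by
  obtain ⟨p, hp⟩ := hg
  -- x = (n*y - s(n+2) - 1)/(n+1), l = y - x
  obtain ⟨q, hq⟩ := poly_line p (C (1/(n+1)) * (C n * X - C (s*(n+2)+1)))
    (X - C (1/(n+1)) * (C n * X - C (s*(n+2)+1)))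
  have key : ∀ y m, F y m * q.eval y = y + (n+1)*m + s*(1-n) := by
    intro y m
    rw [hq, ← hp]
    have := h (1/(n+1) * (n*y - (s*(n+2)+1))) (y - 1/(n+1) * (n*y - (s*(n+2)+1))) m
    simp only [add_sub_cancel] at this
    simp only [eval_mul, eval_sub, eval_C, eval_X]
    rw [this]
    field_simp
    ring
  obtain ⟨c, hc, hqc⟩ := noroot_const q (by
    intro y hy
    have h0 := key y 0
    have h1 := key y 1
    rw [hy] at h0 h1
    apply hn
    linear_combination h0 - h1)
  have hF : ∀ y m, F y m = c⁻¹ * (y + (n+1)*m + s*(1-n)) := by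
    intro y m
    rw [← key, hqc]; field_simp
  refine ⟨c⁻¹, inv_ne_zero hc, hF, ?_⟩
  intro x l
  rw [inv_inv]
  have h0 := h x l ((1 - (x + l) - s*(1-n))/(n+1))
  rw [hF] at h0
  have e : x + l + (n+1) * ((1 - (x + l) - s*(1-n))/(n+1)) + s*(1-n) = 1 := by
    field_simp; ring
  rw [e] at h0
  field_simp at h0
  linear_combination h0

theorem dicho (s K : ℂ) (F g : ℂ → ℂ → ℂ)
    (h : ∀ x l m, F (x + l) m * g x l
      = (x + l + 3 * m - s) * (2 * l - x - 4 * s) + K) : K = 0 := by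
  by_contra hK
  have a0 := h (-(4*s/3)) (4*s/3) 0
  have a1 := h (-(4*s/3)) (4*s/3) 1
  have b0 := h (-((4*s+1)/3)) ((4*s+1)/3) 0
  have b1 := h (-((4*s+1)/3)) ((4*s+1)/3) 1
  simp only [neg_add_cancel] at a0 a1 b0 b1
  have hg : g (-(4*s/3)) (4*s/3) ≠ 0 := by
    intro hg
    apply hK
    rw [hg] at a0
    linear_combination -a0
  have : F 0 0 = F 0 1 := by
    apply mul_right_cancel₀ hg
    linear_combination a0 - a1
  rw [this, b1] at b0
  have : (3:ℂ) = 0 := by linear_combination b0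
  norm_num at this

def VQ (S : ℤ → Prop) (P : ℤ → ℤ → ℂ → ℂ → ℂ) (r s : ℂ) (n : ℤ) : Prop :=
  S n ∧ S (n + 1) ∧ (∃ c : ℂ, c ≠ 0 ∧ (∀ x m, P 1 n x m = c * (x + (n + 1) * m + s * (1 - n))) ∧
      ∀ x l, P (-1) (n + 1) x l = c⁻¹ * (n * l - x - s * (n + 2))) ∧
    ∀ x l, P 0 n x l = n * (l - r)

theorem VFam.supp_of {S P} (h : VFam S P) {n : ℤ} {c s : ℂ} (hn : (n : ℂ) + 1 ≠ 0) (hc : c ≠ 0)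
    (hP : ∀ x m, P 1 n x m = c * (x + (n + 1) * m + s * (1 - n))) : S (n + 1) := by
  by_contra hS
  have := h.supp 1 n (by rwa [add_comm]) (1 - s * (1 - n)) 0
  rw [hP] at this
  apply hc
  linear_combination this

theorem VFam.q1 {S P} (h : VFam S P) {r t s : ℂ} (hs : t + r = 3 * s)
    (h01 : ∀ x l, P 0 1 x l = l - r) (hm : ∀ x l, P (-1) 1 x l = -(x + t)) : VQ S P r s 1 := by
  have h10 : ∀ x l, P 1 0 x l = x + l + r := by
    intro x l
    rw [h.skew 1 0 (by simpa using h.s1), h01]; ring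
  obtain ⟨c, hc, h1, h2⟩ := factor_lemma 1 s (by norm_num) (P 1 1) (P (-1) 2) (h.poly _ _) (by
    intro x l m
    have := h.jac (-1) 1 1 (by simpa using h.s1) x l m
    norm_num [h01, hm, h10] at this
    linear_combination this - (x + l + 2 * m) * hs)
  have h1' : ∀ x m, P 1 1 x m = c * (x + (((1 : ℤ) : ℂ) + 1) * m + s * (1 - ((1 : ℤ) : ℂ))) := by
    simpa using h1
  refine ⟨h.s1, h.supp_of (by norm_num) hc h1', ⟨c, hc, h1', by norm_num at h2 ⊢; exact h2⟩, ?_⟩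
  simpa using h01

theorem VFam.q0 {S P} (h : VFam S P) {r t s : ℂ} {n : ℤ} (hn : (n : ℂ) + 1 ≠ 0)
    (h01 : ∀ x l, P 0 1 x l = l - r) (hq : VQ S P r s n) (x l : ℂ) :
    P 0 (n + 1) x l = (n + 1) * (l - r) := by
  obtain ⟨_, hS, ⟨c, hc, h1, h2⟩, h0⟩ := hq
  have := h.jac 0 1 n (by convert hS using 1; ring) x l ((1 - (x + l) - s * (1 - n)) / (n + 1))
  simp only [zero_add, h01, h0, h1, add_comm 1 n] at this
  have e : x + l + (n+1) * ((1 - (x + l) - s*(1-n))/(n+1)) + s*(1-n) = 1 := by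
    field_simp; ring
  rw [e] at this
  have e2 : ((n : ℂ)+1) * ((1 - (x + l) - s*(1-n))/(n+1)) = (1 - (x + l) - s*(1-n)) := by
    field_simp
  apply mul_left_cancel₀ hc
  linear_combination this + (c * (l - r) * (n + 1)) * e2

theorem VFam.qjac {S P} (h : VFam S P) {r t s : ℂ} {n : ℤ} (hn : (n : ℂ) + 1 ≠ 0)
    (hs : t + r = 3 * s)
    (h01 : ∀ x l, P 0 1 x l = l - r) (hm : ∀ x l, P (-1) 1 x l = -(x + t)) 
    (hq : VQ S P r s n) (x l m : ℂ) :
    P 1 (n + 1) (x + l) m * P (-1) (n + 1 + 1) x l =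
     (x + l + (n + 2) * m - s * n) * ((n + 1) * l - x - s * (n + 3)) + (n + 1) * (t * r - 2 * s ^ 2) := by
  have h0 := h.q0 hn (t := t) h01 hq
  obtain ⟨_, hS, ⟨c, hc, h1, h2⟩, _⟩ := hq
  have := h.jac (-1) 1 (n + 1) (by convert hS using 1; ring) x l m
  simp only [show (-1 : ℤ) + 1 = 0 by ring, show (1 : ℤ) + (n + 1) = n + 1 + 1 by ring,
    show -1 + (n + 1) = n by ring, h0, h1, h2, hm] at this
  field_simp at this
  linear_combination this - (n + 1) * (l + m) * hs

theorem VFam.qall {S P} (h : VFam S P) {r t s : ℂ} (hs : t + r = 3 * s)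
    (h01 : ∀ x l, P 0 1 x l = l - r) (hm : ∀ x l, P (-1) 1 x l = -(x + t)) :
    t * r = 2 * s ^ 2 ∧ ∀ n : ℤ, 1 ≤ n → VQ S P r s n := by
  have q1 := h.q1 hs h01 hm
  have hK : t * r = 2 * s ^ 2 := by
    have := dicho s (2 * (t * r - 2 * s ^ 2)) (P 1 2) (P (-1) 3) (by
      intro x l m
      have := h.qjac (by norm_num) hs h01 hm q1 x l m
      norm_num at this
      linear_combination this)
    linear_combination this / 2
  refine ⟨hK, fun n hn => ?_⟩
  induction n, hn using Int.leInduction with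
  | base => exact q1
  | succ n hn ih =>
    have hn1 : (n : ℂ) + 1 ≠ 0 := by exact_mod_cast (by omega : n + 1 ≠ 0)
    have hn2 : (((n + 1 : ℤ)) : ℂ) + 1 ≠ 0 := by exact_mod_cast (by omega : n + 1 + 1 ≠ 0)
    obtain ⟨c, hc, h1, h2⟩ := factor_lemma ((n + 1 : ℤ) : ℂ) s hn2 (P 1 (n + 1))
      (P (-1) (n + 1 + 1)) (h.poly _ _) (by
      intro x l m
      have := h.qjac hn1 hs h01 hm ih x l m
      rw [this]; push_cast
      linear_combination (n + 1 : ℂ) * hK)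
    exact ⟨ih.2.1, h.supp_of hn2 hc h1, ⟨c, hc, h1, h2⟩, by
      intro x l
      rw [h.q0 hn1 (t := t) h01 ih]; push_cast; ring⟩

theorem VT_neg (t r s : ℂ) (i j : ℤ) (x l : ℂ) : VT t r s (-i) (-j) x l = - VT t r s i j x l := by
  have : -i + -j = 0 ↔ i + j = 0 := by omega
  simp only [VT, this, neg_eq_zero, Int.cast_neg]
  split_ifs <;> ring

/-- positive `i` -/
theorem VFam.posdet {S P} (h : VFam S P) {r t s : ℂ} (hs : t + r = 3 * s) (hK : t * r = 2 * s ^ 2)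
    (hS : ∀ i, S i) (h1 : ∀ j x l, P 1 j x l = VT t r s 1 j x l) (i : ℤ) (hi : 1 ≤ i) :
    ∀ j x l, P i j x l = VT t r s i j x l := by
  induction i, hi using Int.leInduction with
  | base => exact h1
  | succ n hn ih =>
    intro j x y
    have hr : r = 3 * s - t := by linear_combination hs
    subst hr
    have key : ∀ l m, (n * l - m + s * (1 - n)) * (P (n + 1) j x (l + m) 
        - VT t (3 * s - t) s (n + 1) j x (l + m)) = 0 := by
      intro l m
      have := h.jac 1 n j (hS _) x l m
      rw [ih, ih, h1, h1, h1, add_comm 1 n, add_comm 1 j] at this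
      have e : VT t (3 * s - t) s 1 n (-l - m) l = n * l - m + s * (1 - n) := by
        simp only [VT]
        rw [if_neg (by omega), if_neg (by omega), if_neg (by omega)]
        push_cast; ring
      rw [e] at this
      have e2 : VT t (3 * s - t) s n j (x + l) m * VT t (3 * s - t) s 1 (n + j) x l
         - VT t (3 * s - t) s 1 j (x + m) l * VT t (3 * s - t) s n (j + 1) x m
         = (n * l - m + s * (1 - n)) * VT t (3 * s - t) s (n + 1) j x (l + m) := by
        have a1 : ¬ (n = 0) := by omega
        have a2 : ¬ (n + 1 = 0) := by omega
        clear this e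
        by_cases c1 : n + j = 0
        · obtain rfl : j = -n := by omega
          by_cases c2 : n = 1
          · subst c2
            simp [VT]
            ring1
          · have b1 : ¬ (1 + -n = 0) := by omega
            have b2 : ¬ (n + 1 + -n = 0) := by omega
            have b3 : ¬ (-n + 1 = 0) := by omega
            simp [VT, a1, a2, b1, b3]
            linear_combination (n : ℂ) * hK
        · by_cases c2 : j = 0
          · subst c2
            have b1 : ¬ (1 + n = 0) := by omega
            simp [VT, a1, a2, b1]
            linear_combination (0 : ℂ) * hK
          · by_cases c3 : j = -1
            · subst c3
              have b2 : ¬ (n + 1 + -1 = 0) := by omega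
              have b3 : ¬ (1 + (n + -1) = 0) := by omega
              simp [VT, a1, a2, c1]
              linear_combination (-n : ℂ) * hK
            · by_cases c4 : j = -(n + 1)
              · subst c4
                have b3 : ¬ (1 + -(n + 1) = 0) := by omega
                have b4 : ¬ (n + -(n + 1) = 0) := by omega
                have b5 : n + (-(n + 1) + 1) = 0 := by omega
                have b6 : 1 + (n + -(n + 1)) = 0 := by omega
                have b7 : n + 1 + -(n + 1) = 0 := by omega
                have b8 : ¬ (-(n + 1) = 0) := by omega
                have b9 : ¬ (-(n + 1) + 1 = 0) := by omega
                simp only [VT, a1, a2, b3, b4, b5, b6, b7, b8, if_true, if_false]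
                push_cast
                simp
                linear_combination (0 : ℂ) * hK
              · have b3 : ¬ (1 + j = 0) := by omega
                have b4 : ¬ (n + (j + 1) = 0) := by omega
                have b6 : ¬ (1 + (n + j) = 0) := by omega
                have b7 : ¬ (n + 1 + j = 0) := by omega
                have b8 : ¬ (j + 1 = 0) := by omega
                simp only [VT, a1, a2, b3, b4, b6, b7, b8, c1, c2, if_false, one_ne_zero]
                push_cast
                linear_combination (0 : ℂ) * hK
      linear_combination e2 - this
    -- pick l with nonzero coefficient, l + m = y
    have hn1 : (n : ℂ) + 1 ≠ 0 := by exact_mod_cast (by omega : n + 1 ≠ 0)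
    have := key ((1 + y - s * (1 - n)) / (n + 1)) (y - (1 + y - s * (1 - n)) / (n + 1))
    rw [add_sub_cancel] at this
    have e : n * ((1 + y - s * (1 - n)) / (n + 1)) - (y - (1 + y - s * (1 - n)) / (n + 1))
      + s * (1 - n) = 1 := by field_simp; ring
    rw [e] at this
    linear_combination this

def VK (c : ℤ → ℂ) (n : ℤ) : ℂ := ∏ m ∈ Finset.Ico 1 n, c m

theorem VK_one (c : ℤ → ℂ) {n : ℤ} (hn : n ≤ 1) : VK c n = 1 := by
  rw [VK, Finset.Ico_eq_empty (by omega), Finset.prod_empty]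

theorem VK_succ (c : ℤ → ℂ) {n : ℤ} (hn : 1 ≤ n) : VK c (n + 1) = VK c n * c n := by
  have : Finset.Ico 1 (n + 1) = insert n (Finset.Ico 1 n) := by
    ext a; simp only [Finset.mem_Ico, Finset.mem_insert]; omega
  rw [VK, this, Finset.prod_insert (by simp), mul_comm, VK]

theorem VK_ne (c : ℤ → ℂ) (h : ∀ n, c n ≠ 0) (n : ℤ) : VK c n ≠ 0 :=
  Finset.prod_ne_zero_iff.2 fun i _ => h i

theorem VFam.full {S P} (h : VFam S P) {r t s : ℂ} (hs : t + r = 3 * s)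
    (h01 : ∀ x l, P 0 1 x l = l - r) (hm : ∀ x l, P (-1) 1 x l = -(x + t)) :
    t * r = 2 * s ^ 2 ∧ (∀ i, S i) ∧ ∃ k : ℤ → ℂ, (∀ i, k i ≠ 0) ∧
      ∀ i j x l, k i * k j / k (i + j) * P i j x l = VT t r s i j x l := by
  obtain ⟨hK, hq⟩ := h.qall hs h01 hm
  have h10 : ∀ x l, P 1 0 x l = x + l + r := by
    intro x l
    rw [h.skew 1 0 (by simpa using h.s1), h01]; ring
  have hm1 : ∀ x l, P 1 (-1) x l = x + t := by
    intro x l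
    rw [h.skew 1 (-1) (by simpa using h.s0), hm]; ring
  have h0m : ∀ x l, P 0 (-1) x l = -(l - r) := by
    intro x l
    have := h.jac 0 (-1) 1 (by simpa using h.s0) (1 - t) l (-l - x)
    norm_num [h01, hm, h.ab] at this
    linear_combination this
  have hm0 : ∀ x l, P (-1) 0 x l = -(x + l + r) := by
    intro x l
    rw [h.skew (-1) 0 (by simpa using h.sm1), h0m]; ring
  obtain ⟨_, hq'⟩ := (h.reflect.gauge (fun i => if i = 0 then -1 else 1)
    (by intro i; split_ifs <;> norm_num)).qall hs
    (by intro x l; simp [h0m]) (by intro x l; simp [hm1])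
  have hS : ∀ i, S i := by
    intro i
    rcases lt_trichotomy i 0 with hi | rfl | hi
    · have := (hq' (-i) (by omega)).1
      simpa using this
    · exact h.s0
    · exact (hq i (by omega)).1
  have H : ∀ n : ℤ, ∃ c : ℂ, c ≠ 0 ∧ (1 ≤ n → 
      (∀ x m, P 1 n x m = c * (x + (n + 1) * m + s * (1 - n))) ∧
      ∀ x l, P (-1) (n + 1) x l = c⁻¹ * (n * l - x - s * (n + 2))) := by
    intro n
    by_cases hn : 1 ≤ n
    · obtain ⟨c, hc, h'⟩ := (hq n hn).2.2.1
      exact ⟨c, hc, fun _ => h'⟩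
    · exact ⟨1, one_ne_zero, fun h => absurd h hn⟩
  have H' : ∀ n : ℤ, ∃ c : ℂ, c ≠ 0 ∧ (1 ≤ n → 
      (∀ x m, P (-1) (-n) x m = - c * (x + (n + 1) * m + s * (1 - n))) ∧
      ∀ x l, P 1 (-(n + 1)) x l = - c⁻¹ * (n * l - x - s * (n + 2))) := by
    intro n
    by_cases hn : 1 ≤ n
    · obtain ⟨c, hc, h1, h2⟩ := (hq' n hn).2.2.1
      have e1 : ¬ (n = 0) := by omega
      have e2 : ¬ (n + 1 = 0) := by omega
      refine ⟨-c, neg_ne_zero.2 hc, fun _ => ⟨?_, ?_⟩⟩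
      · intro x m
        have := h1 x m
        simp [e1, e2, add_comm 1 n] at this
        rw [this]; ring
      · intro x m
        have := h2 x m
        simp [e1, e2] at this
        rw [neg_add, add_comm]
        rw [this, inv_neg]; ring
    · exact ⟨1, one_ne_zero, fun h => absurd h hn⟩
  choose c hc hP using H
  choose d hd hP' using H'
  have h0 : ∀ j x l, P 0 j x l = j * (l - r) := by
    intro j x l
    rcases lt_trichotomy j 0 with hi | rfl | hi
    · have := (hq' (-j) (by omega)).2.2.2 x l
      have e : ¬ (j = 0) := by omega
      simp [e] at this
      linear_combination this
    · simp [h.ab]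
    · exact (hq j (by omega)).2.2.2 x l
  set k : ℤ → ℂ := fun n => VK c n * VK d (-n) with hk
  have hk0 : ∀ i, k i ≠ 0 := fun i => mul_ne_zero (VK_ne c hc _) (VK_ne d hd _)
  have k0 : k 0 = 1 := by simp [hk, VK_one]
  have k1 : k 1 = 1 := by simp [hk, VK_one]
  have km1 : k (-1) = 1 := by simp [hk, VK_one]
  have kp : ∀ n, 1 ≤ n → k (n + 1) = k n * c n := by
    intro n hn
    simp only [hk]
    rw [VK_succ c hn, VK_one d (by omega), VK_one d (by omega)]; ring
  have kn : ∀ n, 1 ≤ n → k (-(n + 1)) = k (-n) * d n := by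
    intro n hn
    simp only [hk, neg_neg]
    rw [VK_succ d hn, VK_one c (by omega), VK_one c (by omega)]; ring
  refine ⟨hK, hS, k, hk0, ?_⟩
  have F := h.gauge k hk0
  -- row 1
  have R1 : ∀ j x l, k 1 * k j / k (1 + j) * P 1 j x l = VT t r s 1 j x l := by
    intro j x l
    rcases lt_trichotomy j 0 with hi | rfl | hi
    · obtain ⟨n, rfl⟩ : ∃ n, j = -(n + 1) := ⟨-j - 1, by ring⟩
      by_cases e : n = 0
      · subst e
        simp [VT, k0, k1, km1, hm1]
      · rw [(hP' n (by omega)).2, kn n (by omega), show 1 + -(n + 1) = -n by ring, k1]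
        have a1 := hk0 (-n)
        have a2 := hd n
        have e1 : ¬ (1 + -(n + 1) = 0) := by omega
        have e2 : ¬ (-(n + 1) = 0) := by omega
        simp only [VT, e1, e2, if_false, one_ne_zero]
        field_simp
        push_cast; ring
    · simp [VT, k0, k1, h10]
    · rw [(hP j (by omega)).1, add_comm 1 j, kp j (by omega), k1]
      have a1 := hk0 j
      have a2 := hc j
      have e1 : ¬ (1 + j = 0) := by omega
      have e2 : ¬ (j = 0) := by omega
      simp only [VT, e1, e2, if_false, one_ne_zero]
      field_simp
      push_cast; ring
  have Rm1 : ∀ j x l, k (-1) * k j / k (-1 + j) * P (-1) j x l = VT t r s (-1) j x l := by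
    intro j x l
    rcases lt_trichotomy j 0 with hi | rfl | hi
    · obtain ⟨n, rfl⟩ : ∃ n, j = -n := ⟨-j, by ring⟩
      rw [(hP' n (by omega)).1, show -1 + -n = -(n + 1) by ring, kn n (by omega), km1]
      have a1 := hk0 (-n)
      have a2 := hd n
      have e1 : ¬ (-1 + -n = 0) := by omega
      have e2 : ¬ (n = 0) := by omega
      simp only [VT, e1, e2, if_false, neg_eq_zero, one_ne_zero]
      field_simp
      push_cast; ring
    · simp [VT, k0, km1, hm0]
    · obtain ⟨n, rfl⟩ : ∃ n, j = n + 1 := ⟨j - 1, by ring⟩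
      by_cases e : n = 0
      · subst e
        simp [VT, k0, k1, km1, hm]
      · rw [(hP n (by omega)).2, kp n (by omega), show -1 + (n + 1) = n by ring, km1]
        have a1 := hk0 n
        have a2 := hc n
        have e1 : ¬ (-1 + (n + 1) = 0) := by omega
        have e2 : ¬ (n + 1 = 0) := by omega
        simp only [VT, e1, e2, if_false, neg_eq_zero, one_ne_zero]
        field_simp
        push_cast; ring
  intro i j x l
  rcases lt_trichotomy i 0 with hi | rfl | hi
  · have := (F.reflect.gauge (fun _ => -1) (by norm_num)).posdet hs hK (fun i => hS _) (by
      intro j x l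
      have := Rm1 (-j) x l
      rw [VT_neg] at this
      rw [this]; ring) (-i) (by omega) (-j) x l
    simp only [neg_neg, VT_neg] at this
    linear_combination -this
  · have a1 := hk0 j
    rw [h0, k0, zero_add, one_mul, div_self a1]
    simp only [VT]
    split_ifs with e
    · have : j = 0 := by omega
      simp [this]
    · ring
  · exact F.posdet hs hK hS R1 i (by omega) j x l

section LB
variable {L : Type} [AddCommGroup L] [Module ℂ L]

theorem sum_antidiag_box (f : ℕ → ℕ → L) (N : ℕ) (h : ∀ j k, N ≤ j ∨ N ≤ k → f j k = 0) :
    ∑ m ∈ Finset.range (2 * N), ∑ x ∈ Finset.HasAntidiagonal.antidiagonal m, f x.1 x.2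
      = ∑ j ∈ Finset.range N, ∑ k ∈ Finset.range N, f j k := by
  rw [← Finset.sum_product']
  rw [← Finset.sum_fiberwise_of_maps_to (s := Finset.range N ×ˢ Finset.range N)
    (t := Finset.range (2 * N)) (g := fun x => x.1 + x.2)
    (by intro x hx; simp at hx ⊢; omega)]
  refine Finset.sum_congr rfl fun m _ => ?_
  symm
  apply Finset.sum_subset
  · intro x hx
    simp at hx ⊢
    omega
  · intro x hx hx'
    simp at hx hx'
    apply h
    by_contra hc
    push Not at hc
    exact hx' hc.1 hc.2 hx

namespace LieConformalAlgebra
variable (C : LieConformalAlgebra L)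

def lb (l : ℂ) (a b : L) : L := ∑ᶠ n : ℕ, (l ^ n * ((Nat.factorial n : ℂ))⁻¹) • C.prd n a b

theorem lb_eq (l : ℂ) (a b : L) (N : ℕ) (h : ∀ n, N ≤ n → C.prd n a b = 0) :
    C.lb l a b = ∑ n ∈ Finset.range N, (l ^ n * ((Nat.factorial n : ℂ))⁻¹) • C.prd n a b := by
  apply finsum_eq_sum_of_support_subset
  intro n hn
  simp only [Finset.coe_range, Set.mem_Iio]
  by_contra hc
  apply hn
  simp [h n (by omega)]

theorem bound2 (a b c d : L) : ∃ N, ∀ n, N ≤ n → C.prd n a b = 0 ∧ C.prd n c d = 0 := by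
  obtain ⟨N, hN⟩ := C.bound a b
  obtain ⟨M, hM⟩ := C.bound c d
  exact ⟨max N M, fun n hn => ⟨hN n (le_trans (le_max_left _ _) hn),
    hM n (le_trans (le_max_right _ _) hn)⟩⟩

theorem lb_add_left (l : ℂ) (a a' b : L) : C.lb l (a + a') b = C.lb l a b + C.lb l a' b := by
  obtain ⟨N, hN⟩ := C.bound2 a b a' b
  rw [C.lb_eq l _ _ N (fun n hn => by simp [hN n hn]), C.lb_eq l _ _ N (fun n hn => (hN n hn).1),
    C.lb_eq l _ _ N (fun n hn => (hN n hn).2), ← Finset.sum_add_distrib]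
  simp

theorem lb_add_right (l : ℂ) (a b b' : L) : C.lb l a (b + b') = C.lb l a b + C.lb l a b' := by
  obtain ⟨N, hN⟩ := C.bound2 a b a b'
  rw [C.lb_eq l _ _ N (fun n hn => by simp [hN n hn]), C.lb_eq l _ _ N (fun n hn => (hN n hn).1),
    C.lb_eq l _ _ N (fun n hn => (hN n hn).2), ← Finset.sum_add_distrib]
  simp

theorem lb_smul_left (l z : ℂ) (a b : L) : C.lb l (z • a) b = z • C.lb l a b := by
  obtain ⟨N, hN⟩ := C.bound a b
  rw [C.lb_eq l _ _ N (fun n hn => by simp [hN n hn]), C.lb_eq l _ _ N hN, Finset.smul_sum]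
  simp [smul_comm z]

theorem lb_smul_right (l z : ℂ) (a b : L) : C.lb l a (z • b) = z • C.lb l a b := by
  obtain ⟨N, hN⟩ := C.bound a b
  rw [C.lb_eq l _ _ N (fun n hn => by simp [hN n hn]), C.lb_eq l _ _ N hN, Finset.smul_sum]
  simp [smul_comm z]

theorem lb_sum_left (l : ℂ) (s : Finset ℕ) (f : ℕ → L) (b : L) :
    C.lb l (∑ n ∈ s, f n) b = ∑ n ∈ s, C.lb l (f n) b := 
  map_sum (⟨⟨fun a => C.lb l a b, by simpa using C.lb_smul_left l 0 0 b⟩,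
    fun x y => C.lb_add_left l x y b⟩ : L →+ L) f s

theorem lb_sum_right (l : ℂ) (s : Finset ℕ) (f : ℕ → L) (a : L) :
    C.lb l a (∑ n ∈ s, f n) = ∑ n ∈ s, C.lb l a (f n) := 
  map_sum (⟨⟨fun b => C.lb l a b, by simpa using C.lb_smul_right l 0 a 0⟩,
    fun x y => C.lb_add_right l a x y⟩ : L →+ L) f s

theorem lb_D_left (l : ℂ) (a b : L) : C.lb l (C.D a) b = (-l) • C.lb l a b := by
  obtain ⟨N, hN⟩ := C.bound a b
  rw [C.lb_eq l _ _ (N + 1) (fun n hn => by rw [C.sesq, hN _ (by omega), smul_zero]),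
    C.lb_eq l _ _ N hN, Finset.smul_sum, Finset.sum_range_succ']
  simp only [C.sesq]
  simp only [Nat.cast_zero, neg_zero, zero_smul, smul_zero, add_zero, Nat.add_sub_cancel]
  refine Finset.sum_congr rfl fun n _ => ?_
  rw [smul_smul, smul_smul]
  congr 1
  rw [Nat.factorial_succ]
  have := Nat.factorial_ne_zero n
  push_cast
  field_simp
  ring

theorem lb_D_right (l : ℂ) (a b : L) :
    C.lb l a (C.D b) = C.D (C.lb l a b) + l • C.lb l a b := by
  obtain ⟨N, hN⟩ := C.bound a b
  rw [C.lb_eq l _ _ (N + 1) (fun n hn => by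
    rw [C.sesq', hN n (by omega), hN _ (by omega), smul_zero, map_zero, add_zero])]
  simp only [C.sesq', smul_add, Finset.sum_add_distrib]
  congr 1
  · rw [C.lb_eq l _ _ (N + 1) (fun n hn => hN n (by omega)), map_sum]
    simp
  · rw [C.lb_eq l _ _ N hN, Finset.smul_sum, Finset.sum_range_succ']
    simp only [Nat.cast_zero, zero_smul, smul_zero, add_zero, Nat.add_sub_cancel]
    refine Finset.sum_congr rfl fun n _ => ?_
    rw [smul_smul, smul_smul]
    congr 1
    rw [Nat.factorial_succ]
    have := Nat.factorial_ne_zero n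
    push_cast
    field_simp
    ring

theorem applyP_eq (q : Polynomial ℂ) (x : L) : C.applyP q x = aeval C.D q x := by
  rw [applyP, Polynomial.aeval_def, Polynomial.eval₂_eq_sum, Polynomial.sum, Polynomial.sum,
    LinearMap.sum_apply]
  refine Finset.sum_congr rfl fun n _ => ?_
  rw [Module.End.mul_apply, Module.algebraMap_end_apply, Module.End.pow_apply]

theorem lb_poly_left (l : ℂ) (q : Polynomial ℂ) (a b : L) :
    C.lb l (aeval C.D q a) b = q.eval (-l) • C.lb l a b := by
  induction q using Polynomial.induction_on with
  | C z => simp [Module.algebraMap_end_apply, C.lb_smul_left]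
  | add p q hp hq => simp [C.lb_add_left, hp, hq, add_smul]
  | monomial n z ih =>
    have : (Polynomial.C z * X ^ (n + 1) : Polynomial ℂ) = X * (Polynomial.C z * X ^ n) := by ring
    rw [this, map_mul, Module.End.mul_apply, aeval_X, C.lb_D_left, ih, smul_smul]
    simp

theorem lb_poly_right (l : ℂ) (q : Polynomial ℂ) (a b : L) :
    C.lb l a (aeval C.D q b) = aeval C.D (q.comp (X + Polynomial.C l)) (C.lb l a b) := by
  induction q using Polynomial.induction_on with
  | C z => simp [Module.algebraMap_end_apply, C.lb_smul_right]
  | add p q hp hq => simp [C.lb_add_right, hp, hq]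
  | monomial n z ih =>
    have : (Polynomial.C z * X ^ (n + 1) : Polynomial ℂ) = X * (Polynomial.C z * X ^ n) := by ring
    rw [this, map_mul, Module.End.mul_apply, aeval_X, C.lb_D_right, ih, mul_comp, map_mul,
      Module.End.mul_apply]
    simp [Module.algebraMap_end_apply, smul_comm l z]

theorem binom_c (l m : ℂ) (n : ℕ) : (l + m) ^ n * ((Nat.factorial n : ℂ))⁻¹ =
    ∑ x ∈ Finset.HasAntidiagonal.antidiagonal n, (l ^ x.1 * ((Nat.factorial x.1 : ℂ))⁻¹)
      * (m ^ x.2 * ((Nat.factorial x.2 : ℂ))⁻¹) := by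
  rw [(Commute.all l m).add_pow', Finset.sum_mul]
  refine Finset.sum_congr rfl fun x hx => ?_
  simp only [Finset.HasAntidiagonal.mem_antidiagonal] at hx
  subst hx
  rw [nsmul_eq_mul, Nat.cast_add_choose]
  have := Nat.factorial_ne_zero (x.1 + x.2)
  have := Nat.factorial_ne_zero (x.1)
  have := Nat.factorial_ne_zero (x.2)
  field_simp

theorem lb_jacobi (l m : ℂ) (a b c : L) :
    C.lb l a (C.lb m b c) - C.lb m b (C.lb l a c) = C.lb (l + m) (C.lb l a b) c := by
  have U : ∀ (a : L) (f : ℕ → L) (N : ℕ), (∀ n, N ≤ n → f n = 0) →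
      ∃ M, ∀ n, M ≤ n → ∀ k, C.prd n a (f k) = 0 := by
    intro a f N hN
    choose B hB using fun k => C.bound a (f k)
    refine ⟨(Finset.range N).sup B, fun n hn k => ?_⟩
    by_cases hk : k < N
    · exact hB k n (le_trans (Finset.le_sup (Finset.mem_range.2 hk)) hn)
    · rw [hN k (by omega), map_zero]
  have U' : ∀ (a : L) (f : ℕ → L) (N : ℕ), (∀ n, N ≤ n → f n = 0) →
      ∃ M, ∀ n, M ≤ n → ∀ k, C.prd n (f k) a = 0 := by
    intro a f N hN
    choose B hB using fun k => C.bound (f k) a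
    refine ⟨(Finset.range N).sup B, fun n hn k => ?_⟩
    by_cases hk : k < N
    · exact hB k n (le_trans (Finset.le_sup (Finset.mem_range.2 hk)) hn)
    · rw [hN k (by omega), map_zero, LinearMap.zero_apply]
  obtain ⟨N1, h1⟩ := C.bound b c
  obtain ⟨N2, h2⟩ := C.bound a c
  obtain ⟨N3, h3⟩ := C.bound a b
  obtain ⟨N4, h4⟩ := U a (fun n => C.prd n b c) N1 h1
  obtain ⟨N5, h5⟩ := U b (fun n => C.prd n a c) N2 h2
  obtain ⟨N6, h6⟩ := U' c (fun n => C.prd n a b) N3 h3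
  obtain ⟨N, g1, g2, g3, g4, g5, g6⟩ : ∃ N, N1 ≤ N ∧ N2 ≤ N ∧ N3 ≤ N ∧ N4 ≤ N ∧ N5 ≤ N ∧ N6 ≤ N :=
    ⟨N1 + N2 + N3 + N4 + N5 + N6, by omega, by omega, by omega, by omega, by omega, by omega⟩
  rw [C.lb_eq m b c (2 * N) (fun n hn => h1 n (by omega)),
    C.lb_eq l a c (2 * N) (fun n hn => h2 n (by omega)),
    C.lb_eq l a b N (fun n hn => h3 n (by omega))]
  rw [C.lb_sum_right, C.lb_sum_right, C.lb_sum_left]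
  simp only [C.lb_smul_left, C.lb_smul_right]
  have e1 : ∀ q, C.lb l a (C.prd q b c) = ∑ p ∈ Finset.range (2 * N),
    (l ^ p * ((Nat.factorial p : ℂ))⁻¹) • C.prd p a (C.prd q b c) := fun q =>
    C.lb_eq l _ _ _ (fun n hn => h4 n (by omega) q)
  have e2 : ∀ p, C.lb m b (C.prd p a c) = ∑ q ∈ Finset.range (2 * N),
    (m ^ q * ((Nat.factorial q : ℂ))⁻¹) • C.prd q b (C.prd p a c) := fun q =>
    C.lb_eq m _ _ _ (fun n hn => h5 n (by omega) q)
  have e3 : ∀ j, C.lb (l + m) (C.prd j a b) c = ∑ q ∈ Finset.range (2 * N),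
    ((l + m) ^ q * ((Nat.factorial q : ℂ))⁻¹) • C.prd q (C.prd j a b) c := fun q =>
    C.lb_eq (l + m) _ _ _ (fun n hn => h6 n (by omega) q)
  simp only [e1, e2, e3, Finset.smul_sum]
  rw [Finset.sum_comm (s := Finset.range (2 * N)) (t := Finset.range (2 * N)) 
    (f := fun p q => (l ^ p * ((Nat.factorial p : ℂ))⁻¹) • 
      (m ^ q * ((Nat.factorial q : ℂ))⁻¹) • C.prd q b (C.prd p a c))]
  rw [← Finset.sum_sub_distrib]
  -- g j k q
  let g : ℕ → ℕ → ℕ → L := fun q j k => (m ^ q * ((Nat.factorial q : ℂ))⁻¹) •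
    (l ^ j * ((Nat.factorial j : ℂ))⁻¹) • (l ^ k * ((Nat.factorial k : ℂ))⁻¹) • 
      C.prd (k + q) (C.prd j a b) c
  have lhs : ∀ q, (∑ p ∈ Finset.range (2 * N), (m ^ q * ((Nat.factorial q : ℂ))⁻¹) •
      (l ^ p * ((Nat.factorial p : ℂ))⁻¹) • C.prd p a (C.prd q b c)) -
      (∑ p ∈ Finset.range (2 * N), (l ^ p * ((Nat.factorial p : ℂ))⁻¹) •
      (m ^ q * ((Nat.factorial q : ℂ))⁻¹) • C.prd q b (C.prd p a c))
      = ∑ j ∈ Finset.range N, ∑ k ∈ Finset.range N, g q j k := by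
    intro q
    rw [← sum_antidiag_box (g q) N, ← Finset.sum_sub_distrib]
    · refine Finset.sum_congr rfl fun p _ => ?_
      rw [smul_comm, ← smul_sub, ← smul_sub, C.jacobi, Finset.Nat.sum_antidiagonal_eq_sum_range_succ
        (g q)]
      simp only [Finset.smul_sum]
      refine Finset.sum_congr rfl fun j hj => ?_
      simp only [Finset.mem_range] at hj
      obtain ⟨k, rfl⟩ : ∃ k, p = j + k := ⟨p - j, by omega⟩
      simp only [g]
      rw [show j + k + q - j = k + q by omega, show j + k - j = k by omega]
      simp only [smul_smul]
      congr 1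
      rw [Nat.cast_add_choose]
      have := Nat.factorial_ne_zero (j + k)
      have := Nat.factorial_ne_zero j
      have := Nat.factorial_ne_zero k
      have := Nat.factorial_ne_zero q
      field_simp
      ring
    · intro j k hjk
      simp only [g]
      rcases hjk with hj | hk
      · rw [h3 j (by omega)]; simp
      · rw [h6 (k + q) (by omega) j]; simp
  rw [Finset.sum_congr rfl fun q _ => lhs q]
  rw [Finset.sum_comm]
  refine Finset.sum_congr rfl fun j _ => ?_
  have : ∑ q ∈ Finset.range (2 * N), ∑ k ∈ Finset.range N, g q j k
     = ∑ q ∈ Finset.range N, ∑ k ∈ Finset.range N, g q j k := by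
    symm
    apply Finset.sum_subset
    · intro x; simp; omega
    · intro q _ hq
      simp at hq
      apply Finset.sum_eq_zero
      intro k _
      simp only [g]
      rw [h6 (k + q) (by omega) j]; simp
  rw [this, Finset.sum_comm, ← sum_antidiag_box (fun k q => g q j k) N]
  · refine Finset.sum_congr rfl fun n _ => ?_
    rw [binom_c, Finset.sum_smul, Finset.smul_sum]
    refine Finset.sum_congr rfl fun x hx => ?_
    simp only [Finset.HasAntidiagonal.mem_antidiagonal] at hx
    subst hx
    simp only [g, smul_smul]
    congr 1
    ring
  · intro k q hkq
    simp only [g]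
    rw [h6 (k + q) (by omega) j]; simp

theorem lb_skew (l : ℂ) (a b : L) (N : ℕ) (hN : ∀ n, N ≤ n → C.prd n b a = 0) :
    C.lb l a b = - ∑ n ∈ Finset.range (2 * N), ((Nat.factorial n : ℂ))⁻¹ • 
      aeval C.D ((-Polynomial.C l - X) ^ n) (C.prd n b a) := by
  have sk : ∀ n, C.prd n a b = - ∑ j ∈ Finset.range N,
      ((-1 : ℂ) ^ (n + j) * ((Nat.factorial j : ℂ))⁻¹) • (⇑C.D)^[j] (C.prd (n + j) b a) := by
    intro n
    rw [C.skew]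
    congr 1
    apply finsum_eq_sum_of_support_subset
    intro j hj
    simp only [Finset.coe_range, Set.mem_Iio]
    by_contra hc
    apply hj
    have : (⇑C.D)^[j] (0 : L) = 0 := by rw [← Module.End.pow_apply, map_zero]
    simp [hN (n + j) (by omega), this]
  have sk0 : ∀ n, N ≤ n → C.prd n a b = 0 := by
    intro n hn
    rw [sk, neg_eq_zero]
    apply Finset.sum_eq_zero
    intro j _
    rw [hN (n + j) (by omega), ← Module.End.pow_apply, map_zero, smul_zero]
  rw [C.lb_eq l a b N sk0]
  simp only [sk, smul_neg, Finset.sum_neg_distrib, Finset.smul_sum]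
  congr 1
  rw [← sum_antidiag_box (fun n j => (l ^ n * ((Nat.factorial n : ℂ))⁻¹) • 
    ((-1 : ℂ) ^ (n + j) * ((Nat.factorial j : ℂ))⁻¹) • (⇑C.D)^[j] (C.prd (n + j) b a)) N]
  · refine Finset.sum_congr rfl fun n _ => ?_
    rw [show (-Polynomial.C l - X : Polynomial ℂ) = Polynomial.C (-1) * (Polynomial.C l + X) by
      rw [map_neg, map_one]; ring]
    rw [mul_pow, (Commute.all (Polynomial.C l) X).add_pow', ← Polynomial.C_pow, map_mul, aeval_C,
      Module.End.mul_apply, Module.algebraMap_end_apply, map_sum, LinearMap.sum_apply,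
      Finset.smul_sum, Finset.smul_sum]
    refine Finset.sum_congr rfl fun x hx => ?_
    simp only [Finset.HasAntidiagonal.mem_antidiagonal] at hx
    subst hx
    rw [nsmul_eq_mul, ← Polynomial.C_pow, ← Polynomial.C_eq_natCast, ← mul_assoc,
      ← Polynomial.C_mul, map_mul, aeval_C, map_pow, aeval_X, Module.End.mul_apply,
      Module.algebraMap_end_apply, Module.End.pow_apply]
    simp only [smul_smul]
    congr 1
    rw [Nat.cast_add_choose]
    have := Nat.factorial_ne_zero (x.1 + x.2)
    have := Nat.factorial_ne_zero (x.1)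
    have := Nat.factorial_ne_zero (x.2)
    field_simp
  · intro j k hjk
    rw [hN (j + k) (by omega), ← Module.End.pow_apply, map_zero, smul_zero, smul_zero]

end LieConformalAlgebra
end LB

section Main
variable {L : Type} [AddCommGroup L] [Module ℂ L]

theorem RankOneContext.brk (C : RankOneContext L) (i j : ℤ) (n : ℕ) :
    C.prd n (C.bas i) (C.bas j) = (Nat.factorial n : ℂ) • aeval C.D ((C.sp i j).coeff n) (C.bas (i + j)) := by
  rw [C.sp_brkt, ← C.toLieConformalAlgebra.applyP_eq]; rfl

theorem RankOneContext.brk0 (C : RankOneContext L) (i j : ℤ) (n : ℕ) 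
    (hn : (C.sp i j).natDegree + 1 ≤ n) : C.prd n (C.bas i) (C.bas j) = 0 := by
  rw [C.brk, Polynomial.coeff_eq_zero_of_natDegree_lt (by omega)]; simp

theorem RankOneContext.lb_bas (C : RankOneContext L) (l : ℂ) (i j : ℤ) :
    C.toLieConformalAlgebra.lb l (C.bas i) (C.bas j)
      = aeval C.D ((C.sp i j).eval (Polynomial.C l)) (C.bas (i + j)) := by
  rw [C.toLieConformalAlgebra.lb_eq l _ _ _ (C.brk0 i j), Polynomial.eval_eq_sum_range, map_sum,
    LinearMap.sum_apply]
  refine Finset.sum_congr rfl fun n _ => ?_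
  rw [C.brk, smul_smul, ← Polynomial.C_pow, mul_comm ((C.sp i j).coeff n), map_mul, aeval_C,
    Module.End.mul_apply, Module.algebraMap_end_apply]
  congr 1
  have := Nat.factorial_ne_zero n
  field_simp

theorem RankOneContext.inj (C : RankOneContext L) {d : ℤ} (hd : C.G d ≠ ⊥) {p q : Polynomial ℂ}
    (h : aeval C.D p (C.bas d) = aeval C.D q (C.bas d)) : p = q := by
  have h' : aeval C.D (p - q) (C.bas d) = 0 := by simp [h]
  rw [← sub_eq_zero]
  rw [← C.toLieConformalAlgebra.applyP_eq] at h'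
  have := linearIndependent_iff'.1 (C.bas_indep d hd) (p - q).support (p - q).coeff h'
  ext n
  by_cases hn : n ∈ (p - q).support
  · rw [this n hn, Polynomial.coeff_zero]
  · simpa using hn

theorem RankOneContext.vfam (C : RankOneContext L) (h1 : C.G 1 ≠ ⊥) (hm1 : C.G (-1) ≠ ⊥) :
    VFam (fun i => C.G i ≠ ⊥) (fun i j x l => (C.sp i j).evalEval x l) where
  poly i j := ⟨_, fun _ _ => rfl⟩
  jac i j k hS x l m := by
    have hsm : ∀ (z : ℂ) (y : L), z • y = aeval C.D (Polynomial.C z) y := by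
      intro z y; rw [aeval_C, Module.algebraMap_end_apply]
    have := C.toLieConformalAlgebra.lb_jacobi l m (C.bas i) (C.bas j) (C.bas k)
    rw [C.lb_bas, C.lb_bas, C.lb_bas, C.toLieConformalAlgebra.lb_poly_right,
      C.toLieConformalAlgebra.lb_poly_right, C.toLieConformalAlgebra.lb_poly_left, 
      C.lb_bas, C.lb_bas, C.lb_bas, show i + (j + k) = i + j + k by ring, 
      show j + (i + k) = i + j + k by ring,
      hsm,
      ← Module.End.mul_apply, ← Module.End.mul_apply, ← Module.End.mul_apply,
      ← map_mul, ← map_mul, ← map_mul, ← LinearMap.sub_apply, ← map_sub] at this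
    have := congrArg (Polynomial.eval x) (C.inj hS this)
    simp only [eval_sub, eval_mul, eval_comp, eval_add, eval_X, eval_C] at this
    simp only [Polynomial.evalEval]
    rw [show -l - m = -(l + m) by ring, ← this]
  skew i j hS x l := by
    have hN : ∀ n, (C.sp j i).natDegree + 1 ≤ n → C.prd n (C.bas j) (C.bas i) = 0 := C.brk0 j i
    have := C.toLieConformalAlgebra.lb_skew l (C.bas i) (C.bas j) _ hN
    rw [C.lb_bas] at this
    have e : ∀ n, ((Nat.factorial n : ℂ))⁻¹ • 
      aeval C.D ((-Polynomial.C l - X) ^ n) (C.prd n (C.bas j) (C.bas i))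
       = aeval C.D ((-Polynomial.C l - X) ^ n * (C.sp j i).coeff n) (C.bas (i + j)) := by
      intro n
      have := Nat.factorial_ne_zero n
      rw [C.brk, map_smul, smul_smul, inv_mul_cancel₀ (by exact_mod_cast this), one_smul, map_mul,
        Module.End.mul_apply, add_comm j i]
    rw [Finset.sum_congr rfl fun n _ => e n, ← LinearMap.sum_apply, ← map_sum,
      ← LinearMap.neg_apply, ← map_neg] at this
    have := congrArg (Polynomial.eval x) (C.inj hS this)
    simp only [Polynomial.evalEval]
    rw [this, eval_neg, eval_finsetSum, Polynomial.eval_eq_sum_range' (p := C.sp j i) (n := 2 * ((C.sp j i).natDegree + 1)) (by omega),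
      eval_finsetSum]
    congr 1
    refine Finset.sum_congr rfl fun n _ => ?_
    simp [mul_comm]
  supp i j hS x l := by
    have : C.G (i + j) = ⊥ := not_not.1 hS
    simp [C.sp_zero i j (Or.inr (Or.inr this))]
  s0 := C.supp_zero
  s1 := h1
  sm1 := hm1
  ab x l := by
    have : C.sp 0 0 = 0 := by
      ext1 n
      apply C.inj (d := 0) C.supp_zero
      have := C.abelian0 n _ (C.bas_mem 0) _ (C.bas_mem 0)
      rw [C.brk, smul_eq_zero] at this
      rcases this with h | h
      · exact absurd h (by exact_mod_cast Nat.factorial_ne_zero n)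
      · simpa using h
    simp [this]

theorem RankOneContext.free (C : RankOneContext L) (hS : ∀ i, C.G i ≠ ⊥) (k : ℤ → ℂ)
    (hk : ∀ i, k i ≠ 0) :
    C.toLieConformalAlgebra.IsFreePolyBasis (fun i => k i • C.bas i) := by
  have hmem : ∀ i (n : ℕ), (⇑C.D)^[n] (C.bas i) ∈ C.G i := by
    intro i n
    rw [C.bas_span i (hS i)]
    exact Submodule.subset_span ⟨n, rfl⟩
  let b : ∀ i, Module.Basis ℕ ℂ (C.G i) := fun i =>
    Module.Basis.mk (v := fun n => (⟨(⇑C.D)^[n] (C.bas i), hmem i n⟩ : C.G i))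
      (by
        apply LinearIndependent.of_comp (C.G i).subtype
        exact C.bas_indep i (hS i))
      (by
        rintro ⟨x, hx⟩ -
        have hx' := hx
        rw [C.bas_span i (hS i)] at hx'
        have h2 : x ∈ (Submodule.span ℂ (Set.range fun n =>
            (⟨(⇑C.D)^[n] (C.bas i), hmem i n⟩ : C.G i))).map (C.G i).subtype := by
          rw [Submodule.map_span, ← Set.range_comp]
          exact hx'
        obtain ⟨y, hy, hyx⟩ := h2
        have : y = ⟨x, hx⟩ := Subtype.ext hyx
        rwa [← this])
  let B := ((C.internal.collectedBasis b).reindex (Equiv.sigmaEquivProd ℤ ℕ)).isUnitSMul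
    (w := fun q => k q.1) (fun q => (hk q.1).isUnit)
  have hB : (⇑B) = fun q : ℤ × ℕ => (⇑C.D)^[q.2] (k q.1 • C.bas q.1) := by
    funext q
    simp only [B, Module.Basis.isUnitSMul_apply, Module.Basis.reindex_apply]
    rw [DirectSum.IsInternal.collectedBasis_coe]
    simp only [b, Module.Basis.mk_apply, Equiv.sigmaEquivProd_symm_apply]
    rw [← Module.End.pow_apply, ← Module.End.pow_apply, map_smul]
  refine ⟨?_, ?_⟩
  · have := B.linearIndependent
    rwa [hB] at this
  · have := B.span_eq
    rwa [hB] at this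

theorem RankOneContext.brkEq (C : RankOneContext L) (k : ℤ → ℂ)
    (hk : ∀ i, k i ≠ 0) (i j : ℤ) (p : Polynomial (Polynomial ℂ)) 
    (h : ∀ x l, k i * k j / k (i + j) * (C.sp i j).evalEval x l = p.evalEval x l) :
    C.toLieConformalAlgebra.BracketEq (k i • C.bas i) (k j • C.bas j) (k (i + j) • C.bas (i + j)) p := by
  have : p = Polynomial.C (Polynomial.C (k i * k j / k (i + j))) * C.sp i j := by
    apply evalEval_ext
    intro x l
    rw [← h, Polynomial.evalEval_mul]; simp [Polynomial.evalEval]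
  intro n
  rw [C.toLieConformalAlgebra.applyP_eq, this, Polynomial.coeff_C_mul, map_mul, aeval_C,
    Module.End.mul_apply, Module.algebraMap_end_apply, map_smul, map_smul, map_smul,
    LinearMap.smul_apply, C.brk]
  simp only [smul_smul]
  congr 1
  have := hk (i + j)
  field_simp

end Main

theorem evalEval_CL2 (s : ℂ) (i j : ℤ) (x l : ℂ) :
    (pCL2 0 s i j).evalEval x l = VT (2 * s) s s i j x l := by
  simp only [pCL2, Pc, Pd, Pl, VT, Polynomial.evalEval, eval_add, eval_mul, eval_C, eval_X]
  split_ifs with h1 h2 h3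
  · obtain rfl : j = -i := by omega
    push_cast; ring
  · subst h2; push_cast; ring
  · subst h3; push_cast; ring
  · ring

theorem evalEval_CL3 (s : ℂ) (i j : ℤ) (x l : ℂ) :
    (pCL3 s i j).evalEval x l = VT s (2 * s) s i j x l := by
  simp only [pCL3, VT]
  split_ifs with h1 h2 h3 <;>
  · simp only [Pc, Pd, Pl, Polynomial.evalEval, eval_add, eval_sub, eval_mul, eval_C, eval_X]
    try ring

/-- a class `𝒱` algebra with `deg p_{-1,1}(∂) = 1` and
`deg p_{0,1}(λ) = 1` is isomorphic to `CL₂(0,s)` or `CL₃(s)`. -/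
theorem classV_deg_one_one_classification
    {L : Type} [AddCommGroup L] [Module ℂ L] (C : ClassV L)
    (hmem₁ : (C.sp (-1) 1).natDegree = 0)
    (hmem₀ : ∀ n : ℕ, ((C.sp 0 1).coeff n).natDegree = 0)
    (hdeg₁ : ((C.sp (-1) 1).coeff 0).natDegree = 1)
    (hdeg₀ : (C.sp 0 1).natDegree = 1) :
    ∃ s : ℂ, C.toLieConformalAlgebra.IsCL2 0 s ∨ C.toLieConformalAlgebra.IsCL3 s := by

  obtain ⟨a, r, ha, h01⟩ : ∃ a r : ℂ, a ≠ 0 ∧ ∀ x l, (C.sp 0 1).evalEval x l = a * (l - r) := by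
    have hz : (C.sp 0 1).coeff 1 ≠ 0 := by
      rw [← hdeg₀]
      exact Polynomial.leadingCoeff_ne_zero.2 C.ne_01
    obtain ⟨a, ha⟩ := Polynomial.natDegree_eq_zero.1 (hmem₀ 1)
    obtain ⟨b, hb⟩ := Polynomial.natDegree_eq_zero.1 (hmem₀ 0)
    have ha0 : a ≠ 0 := by
      rintro rfl
      apply hz
      rw [← ha]; simp
    refine ⟨a, -b / a, ha0, fun x l => ?_⟩
    simp only [Polynomial.evalEval]
    rw [Polynomial.eval_eq_sum_range (p := C.sp 0 1), hdeg₀, Finset.sum_range_succ, Finset.sum_range_one, ← ha, ← hb]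
    simp
    field_simp
    ring
  obtain ⟨b, t, hb, hm11⟩ : ∃ b t : ℂ, b ≠ 0 ∧ ∀ x l, (C.sp (-1) 1).evalEval x l = b * (x + t) := by
    obtain ⟨q, hq⟩ := Polynomial.natDegree_eq_zero.1 hmem₁
    rw [← hq, Polynomial.coeff_C_zero] at hdeg₁
    have hz : q.coeff 1 ≠ 0 := by
      rw [← hdeg₁]
      apply Polynomial.leadingCoeff_ne_zero.2
      rintro rfl
      simp at hdeg₁
    refine ⟨q.coeff 1, q.coeff 0 / q.coeff 1, hz, fun x l => ?_⟩
    rw [← hq]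
    simp only [Polynomial.evalEval, Polynomial.eval_C]
    rw [Polynomial.eval_eq_sum_range, hdeg₁, Finset.sum_range_succ, Finset.sum_range_one]
    field_simp
    ring
  set k0 : ℤ → ℂ := fun i => if i = 0 then a⁻¹ else if i = -1 then -(a * b)⁻¹ else 1 with hk0
  have hk0' : ∀ i, k0 i ≠ 0 := by
    intro i
    simp only [hk0]
    split_ifs
    · exact inv_ne_zero ha
    · exact neg_ne_zero.2 (inv_ne_zero (mul_ne_zero ha hb))
    · exact one_ne_zero
  obtain ⟨s, hs⟩ : ∃ s : ℂ, t + r = 3 * s := ⟨(t + r) / 3, by ring⟩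
  obtain ⟨hK, hS, k, hk, H⟩ := ((C.toRankOneContext.vfam C.supp_one C.supp_negone).gauge k0 hk0').full
    (r := r) (t := t) hs
    (by intro x l; simp [hk0, h01]; field_simp)
    (by intro x l; simp [hk0, hm11]; field_simp; ring)
  have hkk : ∀ i, k i * k0 i ≠ 0 := fun i => mul_ne_zero (hk i) (hk0' i)
  have H' : ∀ i j x l, (k i * k0 i) * (k j * k0 j) / (k (i + j) * k0 (i + j)) *
      (C.sp i j).evalEval x l = VT t r s i j x l := by
    intro i j x l
    rw [← H]
    have := hk (i + j)
    have := hk0' (i + j)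
    field_simp
  have free := C.toRankOneContext.free hS _ hkk
  have hd : (t - 2 * s) * (t - s) = 0 := by linear_combination -hK + t * hs
  refine ⟨s, ?_⟩
  rcases mul_eq_zero.1 hd with h | h
  · left
    obtain rfl : t = 2 * s := by linear_combination h
    obtain rfl : r = s := by linear_combination hs
    refine ⟨_, free, fun i j => C.toRankOneContext.brkEq _ hkk i j _ fun x l => ?_⟩
    rw [H', evalEval_CL2]
  · right
    obtain rfl : t = s := by linear_combination h
    obtain rfl : r = 2 * t := by linear_combination hs
    refine ⟨_, free, fun i j => C.toRankOneContext.brkEq _ hkk i j _ fun x l => ?_⟩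
    rw [H', evalEval_CL3]
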